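/- For every λ > 0 there exists a unique C³ function k : T → ℝ satisfying the kernel equation k_{xxx} + k_{yyy} + k_x + k_y = −λk on T together with the boundary conditions k(x,1) = 0, k(x,x) = 0 and k_x(x,x) = (λ/3)(1−x) for all x ∈ [0,1]. -/

import Mathlib

open MeasureTheory

noncomputable section

/-- The closed triangle `T = {(x, y) : 0 ≤ x ≤ y ≤ 1}`. -/
def T : Set (ℝ × ℝ) := {q : ℝ × ℝ | 0 ≤ q.1 ∧ q.1 ≤ q.2 ∧ q.2 ≤ 1}

/-- Partial derivative in the first variable. -/
def pdx (f : ℝ → ℝ → ℝ) (x y : ℝ) : ℝ := deriv (fun x' => f x' y) x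

/-- Partial derivative in the second variable. -/
def pdy (f : ℝ → ℝ → ℝ) (x y : ℝ) : ℝ := deriv (fun y' => f x y') y

/-- A controller kernel for `lam`: a C³ function with
`k_xxx + k_yyy + k_x + k_y = -lam k` on `T`, `k(x,1)=0`, `k(x,x)=0`,
`k_x(x,x) = (lam/3)(1-x)`. -/
def IsControllerKernel (lam : ℝ) (k : ℝ → ℝ → ℝ) : Prop :=
  ContDiff ℝ 3 (Function.uncurry k) ∧
  (∀ x y : ℝ, (x, y) ∈ T →
    pdx (pdx (pdx k)) x y + pdy (pdy (pdy k)) x y + pdx k x y + pdy k x y = -lam * k x y) ∧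
  (∀ x ∈ Set.Icc (0:ℝ) 1, k x 1 = 0) ∧
  (∀ x ∈ Set.Icc (0:ℝ) 1, k x x = 0) ∧
  (∀ x ∈ Set.Icc (0:ℝ) 1, pdx k x x = lam / 3 * (1 - x))

section Existence

open NormedSpace BoundedContinuousFunction

/-- Taylor coefficients of the kernel at the corner `x = y = 1`: `kernelCoeff lam j i` is the
coefficient of `(1 - y) ^ i / i! * (y - x) ^ j / j!`. -/
def kernelCoeff (lam : ℝ) : ℕ → ℕ → ℝ
  | 0, _ => 0
  | 1, i => if i = 1 then -(lam / 3) else 0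
  | _ + 2, 0 => 0
  | j + 2, i + 1 => kernelCoeff lam (j + 1) (i + 2) - kernelCoeff lam j (i + 3) / 3
      - kernelCoeff lam j (i + 1) / 3 + lam / 3 * kernelCoeff lam j i

/-- Exponential growth rate of `kernelCoeff`. -/
def kernelRate (lam : ℝ) : ℝ := 1 + (2 + lam) / 3

lemma kernelRate_pos {lam : ℝ} (hlam : 0 < lam) : 0 < kernelRate lam := by
  unfold kernelRate; positivity

lemma kernelCoeff_zero_right (lam : ℝ) (j : ℕ) : kernelCoeff lam j 0 = 0 := by
  rcases j with _ | _ | j <;> simp [kernelCoeff]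

lemma abs_kernelCoeff_le {lam : ℝ} (hlam : 0 < lam) (j i : ℕ) :
    |kernelCoeff lam j i| ≤ kernelRate lam ^ j := by
  have hM : 0 < kernelRate lam := kernelRate_pos hlam
  induction j using Nat.strong_induction_on generalizing i with
  | _ j ih =>
    rcases j with _ | _ | j
    · simp [kernelCoeff]
    · simp only [kernelCoeff, zero_add, pow_one]
      split_ifs
      · rw [abs_neg, abs_of_pos (by positivity)]
        unfold kernelRate; linarith
      · simpa using hM.le
    · rcases i with _ | i
      · simp only [kernelCoeff, abs_zero]; positivity
      · have h1 := abs_le.1 (ih (j + 1) (by omega) (i + 2))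
        have h2 := abs_le.1 (ih j (by omega) (i + 3))
        have h3 := abs_le.1 (ih j (by omega) (i + 1))
        have h4 := ih j (by omega) i
        have h5 : |lam / 3 * kernelCoeff lam j i| ≤ lam / 3 * kernelRate lam ^ j := by
          rw [abs_mul, abs_of_pos (by positivity : 0 < lam / 3)]
          gcongr
        have h5 := abs_le.1 h5
        have hP : 0 < kernelRate lam ^ j := by positivity
        have hstep : kernelRate lam ^ (j + 1) + (2 + lam) / 3 * kernelRate lam ^ j
            ≤ kernelRate lam ^ (j + 2) := by
          have : kernelRate lam ^ (j + 2) - kernelRate lam ^ (j + 1)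
              - (2 + lam) / 3 * kernelRate lam ^ j
              = ((2 + lam) / 3) ^ 2 * kernelRate lam ^ j := by
            rw [pow_add, pow_add]; simp only [kernelRate]; ring
          nlinarith [mul_pos (by positivity : 0 < ((2 + lam) / 3) ^ 2) hP]
        simp only [kernelCoeff]
        rw [abs_le]
        constructor <;> nlinarith

/-- Precomposition with a self-map of `ℕ × ℕ`, as an operator on bounded double sequences. -/
def shiftCLM (φ : ℕ × ℕ → ℕ × ℕ) : (ℕ × ℕ →ᵇ ℝ) →L[ℝ] (ℕ × ℕ →ᵇ ℝ) :=
  LinearMap.mkContinuous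
    { toFun := fun f => f.compContinuous ⟨φ, continuous_of_discreteTopology⟩
      map_add' := fun _ _ => rfl
      map_smul' := fun _ _ => rfl } 1 fun f => by
    rw [one_mul]
    exact (BoundedContinuousFunction.norm_le (norm_nonneg f)).2 fun x => f.norm_coe_le_norm (φ x)

/-- The operator acting on coefficient arrays as differentiation in `1 - y`. -/
def shiftFst : (ℕ × ℕ →ᵇ ℝ) →L[ℝ] (ℕ × ℕ →ᵇ ℝ) := shiftCLM fun n => (n.1 + 1, n.2)

/-- The operator acting on rescaled coefficient arrays as differentiation in `y - x`. -/
def shiftSnd (M : ℝ) : (ℕ × ℕ →ᵇ ℝ) →L[ℝ] (ℕ × ℕ →ᵇ ℝ) := M • shiftCLM fun n => (n.1, n.2 + 1)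

@[simp]
lemma shiftFst_apply (f : ℕ × ℕ →ᵇ ℝ) (n : ℕ × ℕ) : shiftFst f n = f (n.1 + 1, n.2) := rfl

@[simp]
lemma shiftSnd_apply (M : ℝ) (f : ℕ × ℕ →ᵇ ℝ) (n : ℕ × ℕ) :
    shiftSnd M f n = M * f (n.1, n.2 + 1) := rfl

lemma shiftFst_pow_apply (m : ℕ) (f : ℕ × ℕ →ᵇ ℝ) (n : ℕ × ℕ) :
    (shiftFst ^ m) f n = f (n.1 + m, n.2) := by
  induction m generalizing f with
  | zero => simp
  | succ m ih =>
    rw [pow_succ, mul_apply_eq_comp, ih, shiftFst_apply]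
    rfl

lemma shiftSnd_pow_apply (M : ℝ) (m : ℕ) (f : ℕ × ℕ →ᵇ ℝ) (n : ℕ × ℕ) :
    (shiftSnd M ^ m) f n = M ^ m * f (n.1, n.2 + m) := by
  induction m generalizing f with
  | zero => simp
  | succ m ih =>
    rw [pow_succ, mul_apply_eq_comp, ih, shiftSnd_apply, pow_succ, mul_assoc]
    rfl

lemma commute_shiftFst_shiftSnd (M : ℝ) : Commute shiftFst (shiftSnd M) := by
  ext f n
  simp

section Series

variable {E : Type*} [NormedAddCommGroup E] [NormedSpace ℝ E]
  (A B : E →L[ℝ] E) (ℓ : E →L[ℝ] ℝ)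

/-- The matrix coefficient `ℓ (exp ((1 - y) A) exp ((y - x) B) f)`. -/
def seriesFn (f : E) (x y : ℝ) : ℝ := ℓ ((exp ((1 - y) • A) * exp ((y - x) • B)) f)

lemma seriesFn_add (f g : E) (x y : ℝ) :
    seriesFn A B ℓ (f + g) x y = seriesFn A B ℓ f x y + seriesFn A B ℓ g x y := by
  simp only [seriesFn, map_add]

lemma seriesFn_smul (c : ℝ) (f : E) (x y : ℝ) :
    seriesFn A B ℓ (c • f) x y = c * seriesFn A B ℓ f x y := by
  simp only [seriesFn, map_smul, smul_eq_mul]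

variable [CompleteSpace E]

lemma contDiff_seriesFn (f : E) : ContDiff ℝ 3 (Function.uncurry (seriesFn A B ℓ f)) := by
  have hexp : ContDiff ℝ 3 (exp : (E →L[ℝ] E) → _) :=
    contDiff_iff_contDiffAt.2 fun A => (exp_analytic (𝕂 := ℝ) A).contDiffAt
  have h1 : ContDiff ℝ 3 fun q : ℝ × ℝ => exp ((1 - q.2) • A) := hexp.comp (by fun_prop)
  have h2 : ContDiff ℝ 3 fun q : ℝ × ℝ => exp ((q.2 - q.1) • B) := hexp.comp (by fun_prop)
  exact ℓ.contDiff.comp ((h1.mul h2).clm_apply contDiff_const)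

lemma pdx_seriesFn (f : E) : pdx (seriesFn A B ℓ f) = seriesFn A B ℓ (-B f) := by
  funext x y
  have h := (hasDerivAt_exp_smul_const (𝕂 := ℝ) B (y - x)).scomp x
    ((hasDerivAt_id x).const_sub y)
  have h' := ℓ.hasFDerivAt.comp_hasDerivAt x
    ((h.const_mul (exp ((1 - y) • A))).clm_apply (hasDerivAt_const x f))
  refine Eq.trans h'.deriv ?_
  simp [seriesFn]

variable {A B} in
lemma pdy_seriesFn (hAB : Commute A B) (f : E) :
    pdy (seriesFn A B ℓ f) = seriesFn A B ℓ (B f - A f) := by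
  funext x y
  have h := (hasDerivAt_exp_smul_const (𝕂 := ℝ) B (y - x)).scomp y
    ((hasDerivAt_id y).sub_const x)
  have h1 := (hasDerivAt_exp_smul_const (𝕂 := ℝ) A (1 - y)).scomp y
    ((hasDerivAt_id y).const_sub 1)
  have h' := ℓ.hasFDerivAt.comp_hasDerivAt y ((h1.mul h).clm_apply (hasDerivAt_const y f))
  refine Eq.trans h'.deriv ?_
  have hc : ∀ v, A (exp ((y - x) • B) v) = exp ((y - x) • B) (A v) := fun v =>
    congrArg (fun L : E →L[ℝ] E => L v) ((hAB.smul_right (y - x)).exp_right).eq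
  simp [seriesFn, hc]
  ring

lemma hasSum_exp_smul_apply (a : ℝ) (f : E) :
    HasSum (fun n : ℕ => (n.factorial : ℝ)⁻¹ * (a ^ n * ℓ ((A ^ n) f))) (ℓ (exp (a • A) f)) := by
  have h := (exp_series_hasSum_exp' (𝕂 := ℝ) (a • A)).mapL
    (ℓ.comp (ContinuousLinearMap.apply ℝ E f))
  simpa [smul_pow] using h

lemma hasSum_seriesFn_diag (f : E) (x : ℝ) :
    HasSum (fun n : ℕ => (n.factorial : ℝ)⁻¹ * ((1 - x) ^ n * ℓ ((A ^ n) f)))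
      (seriesFn A B ℓ f x x) := by
  simpa [seriesFn] using hasSum_exp_smul_apply A ℓ (1 - x) f

lemma hasSum_seriesFn_top (f : E) (x : ℝ) :
    HasSum (fun n : ℕ => (n.factorial : ℝ)⁻¹ * ((1 - x) ^ n * ℓ ((B ^ n) f)))
      (seriesFn A B ℓ f x 1) := by
  simpa [seriesFn] using hasSum_exp_smul_apply B ℓ (1 - x) f

end Series

/-- The coefficient array of the kernel, rescaled to be bounded. -/
def kernelArray {lam : ℝ} (hlam : 0 < lam) : ℕ × ℕ →ᵇ ℝ :=
  BoundedContinuousFunction.ofNormedAddCommGroupDiscrete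
    (fun n => kernelCoeff lam n.2 n.1 / kernelRate lam ^ n.2) 1 fun n => by
      have := pow_pos (kernelRate_pos hlam) n.2
      rw [norm_div, Real.norm_eq_abs, Real.norm_eq_abs, abs_of_pos this, div_le_one this]
      exact abs_kernelCoeff_le hlam _ _

lemma kernelArray_apply {lam : ℝ} (hlam : 0 < lam) (i j : ℕ) :
    kernelArray hlam (i, j) = kernelCoeff lam j i / kernelRate lam ^ j := rfl

lemma exists_isControllerKernel {lam : ℝ} (hlam : 0 < lam) :
    ∃ k : ℝ → ℝ → ℝ, IsControllerKernel lam k := by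
  set M := kernelRate lam with hM
  have hM0 : M ≠ 0 := (kernelRate_pos hlam).ne'
  set c := kernelArray hlam with hc
  set ℓ := BoundedContinuousFunction.evalCLM ℝ ((0, 0) : ℕ × ℕ) (β := ℝ)
  have hℓ (f : ℕ × ℕ →ᵇ ℝ) : ℓ f = f (0, 0) := rfl
  refine ⟨seriesFn shiftFst (shiftSnd M) ℓ c, contDiff_seriesFn _ _ _ _, ?_, ?_, ?_, ?_⟩
  · intro x y _
    simp only [pdx_seriesFn, pdy_seriesFn ℓ (commute_shiftFst_shiftSnd M)]
    rw [← seriesFn_smul, ← seriesFn_add, ← seriesFn_add, ← seriesFn_add]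
    congr 1
    ext ⟨i, j⟩
    simp only [map_sub, map_neg, BoundedContinuousFunction.coe_add,
      BoundedContinuousFunction.coe_sub, BoundedContinuousFunction.coe_neg,
      BoundedContinuousFunction.coe_smul, Pi.add_apply, Pi.sub_apply, Pi.neg_apply,
      shiftSnd_apply, shiftFst_apply, hc, kernelArray_apply, smul_eq_mul, kernelCoeff, ← hM]
    field_simp
    ring
  · intro x _
    refine (hasSum_seriesFn_top _ _ ℓ c x).unique ?_
    have h (n : ℕ) : ℓ ((shiftSnd M ^ n) c) = 0 := by
      rw [hℓ, shiftSnd_pow_apply, hc, kernelArray_apply, kernelCoeff_zero_right]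
      simp
    simp only [h, mul_zero, hasSum_zero]
  · intro x _
    refine (hasSum_seriesFn_diag _ _ ℓ c x).unique ?_
    have h (n : ℕ) : ℓ ((shiftFst ^ n) c) = 0 := by
      rw [hℓ, shiftFst_pow_apply, hc, kernelArray_apply]
      simp [kernelCoeff]
    simp only [h, mul_zero, hasSum_zero]
  · intro x _
    rw [pdx_seriesFn]
    refine (hasSum_seriesFn_diag _ _ ℓ _ x).unique ?_
    have h (n : ℕ) : ℓ ((shiftFst ^ n) (-shiftSnd M c)) = if n = 1 then lam / 3 else 0 := by
      rw [hℓ, shiftFst_pow_apply, BoundedContinuousFunction.coe_neg, Pi.neg_apply, shiftSnd_apply,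
        hc, kernelArray_apply, ← hM]
      simp only [kernelCoeff, zero_add]
      split_ifs
      · field_simp
      · simp
    convert hasSum_ite_eq 1 (lam / 3 * (1 - x)) using 2 with n
    rw [h]
    split_ifs with hn
    · subst hn; simp [mul_comm]
    · simp

end Existence

section Uniqueness

open Set Filter Topology

section PartialDerivatives

variable {F : ℝ → ℝ → ℝ}

lemma hasDerivAt_comp_curve {E : Type*} [NormedAddCommGroup E] [NormedSpace ℝ E] {G : ℝ × ℝ → E}
    (hG : Differentiable ℝ G) {γ₁ γ₂ : ℝ → ℝ} {a b t : ℝ} (h₁ : HasDerivAt γ₁ a t)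
    (h₂ : HasDerivAt γ₂ b t) :
    HasDerivAt (fun s => G (γ₁ s, γ₂ s)) (fderiv ℝ G (γ₁ t, γ₂ t) (a, b)) t :=
  HasFDerivAt.comp_hasDerivAt (f := fun s => (γ₁ s, γ₂ s)) t (hG (γ₁ t, γ₂ t)).hasFDerivAt
    (h₁.prodMk h₂)

lemma hasDerivAt_fst_of_contDiff (hF : ContDiff ℝ 1 (Function.uncurry F)) (x y : ℝ) :
    HasDerivAt (fun x' => F x' y) (fderiv ℝ (Function.uncurry F) (x, y) (1, 0)) x :=
  hasDerivAt_comp_curve (hF.differentiable one_ne_zero) (hasDerivAt_id x) (hasDerivAt_const x y)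

lemma hasDerivAt_snd_of_contDiff (hF : ContDiff ℝ 1 (Function.uncurry F)) (x y : ℝ) :
    HasDerivAt (fun y' => F x y') (fderiv ℝ (Function.uncurry F) (x, y) (0, 1)) y :=
  hasDerivAt_comp_curve (hF.differentiable one_ne_zero) (hasDerivAt_const y x) (hasDerivAt_id y)

lemma pdx_eq_fderiv (hF : ContDiff ℝ 1 (Function.uncurry F)) (x y : ℝ) :
    pdx F x y = fderiv ℝ (Function.uncurry F) (x, y) (1, 0) :=
  (hasDerivAt_fst_of_contDiff hF x y).deriv

lemma pdy_eq_fderiv (hF : ContDiff ℝ 1 (Function.uncurry F)) (x y : ℝ) :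
    pdy F x y = fderiv ℝ (Function.uncurry F) (x, y) (0, 1) :=
  (hasDerivAt_snd_of_contDiff hF x y).deriv

lemma hasDerivAt_pdx (hF : ContDiff ℝ 1 (Function.uncurry F)) (x y : ℝ) :
    HasDerivAt (fun x' => F x' y) (pdx F x y) x :=
  pdx_eq_fderiv hF x y ▸ hasDerivAt_fst_of_contDiff hF x y

lemma hasDerivAt_pdy (hF : ContDiff ℝ 1 (Function.uncurry F)) (x y : ℝ) :
    HasDerivAt (fun y' => F x y') (pdy F x y) y :=
  pdy_eq_fderiv hF x y ▸ hasDerivAt_snd_of_contDiff hF x y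

lemma hasDerivAt_diag (hF : ContDiff ℝ 1 (Function.uncurry F)) (x : ℝ) :
    HasDerivAt (fun x' => F x' x') (pdx F x x + pdy F x x) x := by
  have h := hasDerivAt_comp_curve (hF.differentiable one_ne_zero) (hasDerivAt_id x)
    (hasDerivAt_id x)
  rw [pdx_eq_fderiv hF, pdy_eq_fderiv hF, ← map_add]
  simpa using h

lemma contDiff_pdx {n : ℕ} (hF : ContDiff ℝ (n + 1 : ℕ) (Function.uncurry F)) :
    ContDiff ℝ n (Function.uncurry (pdx F)) := by
  have h1 : ContDiff ℝ 1 (Function.uncurry F) := hF.of_le (by norm_cast; omega)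
  have : Function.uncurry (pdx F) = fun q => fderiv ℝ (Function.uncurry F) q (1, 0) := by
    funext ⟨x, y⟩
    exact pdx_eq_fderiv h1 x y
  rw [this]
  exact (hF.fderiv_right (by norm_cast)).clm_apply contDiff_const

lemma contDiff_pdy {n : ℕ} (hF : ContDiff ℝ (n + 1 : ℕ) (Function.uncurry F)) :
    ContDiff ℝ n (Function.uncurry (pdy F)) := by
  have h1 : ContDiff ℝ 1 (Function.uncurry F) := hF.of_le (by norm_cast; omega)
  have : Function.uncurry (pdy F) = fun q => fderiv ℝ (Function.uncurry F) q (0, 1) := by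
    funext ⟨x, y⟩
    exact pdy_eq_fderiv h1 x y
  rw [this]
  exact (hF.fderiv_right (by norm_cast)).clm_apply contDiff_const

lemma pdx_pdy_comm (hF : ContDiff ℝ 2 (Function.uncurry F)) : pdx (pdy F) = pdy (pdx F) := by
  have h1 : ContDiff ℝ 1 (Function.uncurry F) := hF.of_le (by norm_num)
  have hd : Differentiable ℝ (fderiv ℝ (Function.uncurry F)) :=
    (hF.fderiv_right (m := 1) (by norm_num)).differentiable one_ne_zero
  funext x y
  have hsymm := (hF.contDiffAt (x := (x, y))).isSymmSndFDerivAt (by simp)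
  have hx : pdx (pdy F) x y = fderiv ℝ (fderiv ℝ (Function.uncurry F)) (x, y) (1, 0) (0, 1) := by
    have h := (hasDerivAt_comp_curve hd (hasDerivAt_id x) (hasDerivAt_const x y)).clm_apply
      (hasDerivAt_const x ((0, 1) : ℝ × ℝ))
    simp only [pdx, pdy_eq_fderiv h1]
    simpa using h.deriv
  have hy : pdy (pdx F) x y = fderiv ℝ (fderiv ℝ (Function.uncurry F)) (x, y) (0, 1) (1, 0) := by
    have h := (hasDerivAt_comp_curve hd (hasDerivAt_const y x) (hasDerivAt_id y)).clm_apply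
      (hasDerivAt_const y ((1, 0) : ℝ × ℝ))
    simp only [pdy, pdx_eq_fderiv h1]
    simpa using h.deriv
  rw [hx, hy, hsymm.eq]

lemma pdx_sub {G : ℝ → ℝ → ℝ} (hF : ContDiff ℝ 1 (Function.uncurry F))
    (hG : ContDiff ℝ 1 (Function.uncurry G)) : pdx (F - G) = pdx F - pdx G := by
  funext x y
  exact ((hasDerivAt_pdx hF x y).sub (hasDerivAt_pdx hG x y)).deriv

lemma pdy_sub {G : ℝ → ℝ → ℝ} (hF : ContDiff ℝ 1 (Function.uncurry F))
    (hG : ContDiff ℝ 1 (Function.uncurry G)) : pdy (F - G) = pdy F - pdy G := by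
  funext x y
  exact ((hasDerivAt_pdy hF x y).sub (hasDerivAt_pdy hG x y)).deriv

lemma eq_zero_of_hasDerivAt_of_eqOn_Icc {φ : ℝ → ℝ} {x d : ℝ} (hd : HasDerivAt φ d x)
    (hφ : ∀ z ∈ Icc (0 : ℝ) 1, φ z = 0) (hx : x ∈ Icc (0 : ℝ) 1) : d = 0 :=
  (uniqueDiffOn_Icc zero_lt_one x hx).eq_deriv _ hd.hasDerivWithinAt
    ((hasDerivWithinAt_const x _ (0 : ℝ)).congr hφ (hφ x hx))

/-- If `F` vanishes on the diagonal then so does its derivative along the diagonal. -/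
lemma pdx_add_pdy_eq_zero_of_diag (hF : ContDiff ℝ 1 (Function.uncurry F))
    (h0 : ∀ x ∈ Icc (0 : ℝ) 1, F x x = 0) : ∀ x ∈ Icc (0 : ℝ) 1, pdx F x x + pdy F x x = 0 :=
  fun x hx => eq_zero_of_hasDerivAt_of_eqOn_Icc (hasDerivAt_diag hF x) h0 hx

lemma pdx_eq_zero_of_top (hF : ContDiff ℝ 1 (Function.uncurry F))
    (h0 : ∀ x ∈ Icc (0 : ℝ) 1, F x 1 = 0) : ∀ x ∈ Icc (0 : ℝ) 1, pdx F x 1 = 0 :=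
  fun x hx => eq_zero_of_hasDerivAt_of_eqOn_Icc (hasDerivAt_pdx hF x 1) h0 hx

end PartialDerivatives

/-- A homogeneous solution of the kernel equation has vanishing second-order jet on the
diagonal. -/
lemma diag_jet_eq_zero {lam : ℝ} {h : ℝ → ℝ → ℝ} (hh : ContDiff ℝ 3 (Function.uncurry h))
    (hpde : ∀ x y : ℝ, (x, y) ∈ T →
      pdx (pdx (pdx h)) x y + pdy (pdy (pdy h)) x y + pdx h x y + pdy h x y = -lam * h x y)
    (htop : ∀ x ∈ Icc (0 : ℝ) 1, h x 1 = 0) (hdiag : ∀ x ∈ Icc (0 : ℝ) 1, h x x = 0)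
    (hdx : ∀ x ∈ Icc (0 : ℝ) 1, pdx h x x = 0) {x : ℝ} (hx : x ∈ Icc (0 : ℝ) 1) :
    pdy h x x = 0 ∧ pdy (pdy h) x x = 0 ∧ pdx (pdx h) x x = 0 := by
  have c2 : ContDiff ℝ 2 (Function.uncurry h) := hh.of_le (by norm_num)
  have c1 : ContDiff ℝ 1 (Function.uncurry h) := hh.of_le (by norm_num)
  have cx2 : ContDiff ℝ 2 (Function.uncurry (pdx h)) := contDiff_pdx (n := 2) hh
  have cy2 : ContDiff ℝ 2 (Function.uncurry (pdy h)) := contDiff_pdy (n := 2) hh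
  have cx1 : ContDiff ℝ 1 (Function.uncurry (pdx h)) := cx2.of_le (by norm_num)
  have cy1 : ContDiff ℝ 1 (Function.uncurry (pdy h)) := cy2.of_le (by norm_num)
  have cxx : ContDiff ℝ 1 (Function.uncurry (pdx (pdx h))) := contDiff_pdx (n := 1) cx2
  have cyx : ContDiff ℝ 1 (Function.uncurry (pdy (pdx h))) := contDiff_pdy (n := 1) cx2
  have cyy : ContDiff ℝ 1 (Function.uncurry (pdy (pdy h))) := contDiff_pdy (n := 1) cy2
  have hdy : ∀ x ∈ Icc (0 : ℝ) 1, pdy h x x = 0 := fun x hx => by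
    have := pdx_add_pdy_eq_zero_of_diag c1 hdiag x hx
    linarith [hdx x hx]
  have e1 := pdx_add_pdy_eq_zero_of_diag cx1 hdx
  have e2 := pdx_add_pdy_eq_zero_of_diag cy1 hdy
  rw [pdx_pdy_comm c2] at e2
  have hyy' : ∀ x ∈ Icc (0 : ℝ) 1,
      pdx (pdy (pdy h)) x x + pdy (pdy (pdy h)) x x = 0 := fun x hx => by
    have f1 := eq_zero_of_hasDerivAt_of_eqOn_Icc
      ((hasDerivAt_diag cxx x).add (hasDerivAt_diag cyx x)) e1 hx
    have f2 := eq_zero_of_hasDerivAt_of_eqOn_Icc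
      ((hasDerivAt_diag cyx x).add (hasDerivAt_diag cyy x)) e2 hx
    have s1 : pdx (pdy (pdx h)) = pdy (pdx (pdx h)) := pdx_pdy_comm cx2
    have s2 : pdx (pdy (pdy h)) = pdy (pdy (pdx h)) := by
      rw [pdx_pdy_comm cy2, pdx_pdy_comm c2]
    have f3 := hpde x x ⟨hx.1, le_rfl, hx.2⟩
    rw [hdx x hx, hdy x hx, hdiag x hx] at f3
    rw [s1] at f1 f2
    rw [s2] at f2 ⊢
    linarith
  have hconst : ∀ x ∈ Icc (0 : ℝ) 1, pdy (pdy h) x x = pdy (pdy h) 0 0 :=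
    constant_of_has_deriv_right_zero (f := fun x => pdy (pdy h) x x)
      (fun x _ => (hasDerivAt_diag cyy x).continuousAt.continuousWithinAt)
      fun x hx => by
        have h := (hasDerivAt_diag cyy x).hasDerivWithinAt (s := Ici x)
        rwa [hyy' x ⟨hx.1, hx.2.le⟩] at h
  have one_mem : (1 : ℝ) ∈ Icc (0 : ℝ) 1 := by simp
  have hxx1 := pdx_eq_zero_of_top cx1 (pdx_eq_zero_of_top c1 htop) 1 one_mem
  have hyy : pdy (pdy h) x x = 0 := by
    linarith [hconst x hx, hconst 1 one_mem, e1 1 one_mem, e2 1 one_mem]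
  exact ⟨hdy x hx, hyy, by linarith [e1 x hx, e2 x hx]⟩

/-- A priori bound for `u''' + u' = q u + b` on `[0, 1]` with `u(0) = u'(0) = u(1) = 0`. -/
lemma abs_le_of_third_order_ode {u₀ u₁ u₂ u₃ b : ℝ → ℝ} {q B : ℝ} (hq : 3 / 2 ≤ q)
    (c₀ : Continuous u₀) (c₁ : Continuous u₁) (c₂ : Continuous u₂)
    (d₀ : ∀ y ∈ Ioo (0 : ℝ) 1, HasDerivAt u₀ (u₁ y) y)
    (d₁ : ∀ y ∈ Ioo (0 : ℝ) 1, HasDerivAt u₁ (u₂ y) y)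
    (d₂ : ∀ y ∈ Ioo (0 : ℝ) 1, HasDerivAt u₂ (u₃ y) y)
    (hode : ∀ y ∈ Ioo (0 : ℝ) 1, u₃ y + u₁ y = q * u₀ y + b y)
    (hb : ∀ y ∈ Ioo (0 : ℝ) 1, |b y| ≤ B)
    (h00 : u₀ 0 = 0) (h10 : u₁ 0 = 0) (h01 : u₀ 1 = 0) {y : ℝ} (hy : y ∈ Icc (0 : ℝ) 1) :
    |u₀ y| ≤ 1 + B ^ 2 := by
  have hmono (σ : ℝ) (hσ : σ ^ 2 = 1) : MonotoneOn (fun y => (2 - y) * (u₀ y * u₂ y)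
      - (2 - y) * u₁ y ^ 2 / 2 + u₀ y * u₁ y + (2 - y) * u₀ y ^ 2 / 2 + (1 + B ^ 2) * y
      + σ * u₀ y) (Icc 0 1) := by
    refine monotoneOn_of_hasDerivWithinAt_nonneg (f' := fun y =>
      (2 - y) * u₀ y * (q * u₀ y + b y) + 3 / 2 * u₁ y ^ 2 - u₀ y ^ 2 / 2 + (1 + B ^ 2)
        + σ * u₁ y) (convex_Icc 0 1) (by fun_prop) ?_ ?_
    · intro y hy
      rw [interior_Icc] at hy
      have hw : HasDerivAt (fun y : ℝ => 2 - y) (-1) y := (hasDerivAt_id y).const_sub 2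
      have h := ((((hw.mul ((d₀ y hy).mul (d₂ y hy))).sub
        ((hw.mul ((d₁ y hy).pow 2)).div_const 2)).add ((d₀ y hy).mul (d₁ y hy))).add
        ((hw.mul ((d₀ y hy).pow 2)).div_const 2)).add ((hasDerivAt_id y).const_mul (1 + B ^ 2))
        |>.add ((d₀ y hy).const_mul σ)
      refine (h.congr_deriv ?_).hasDerivWithinAt
      rw [← hode y hy]
      simp
      ring
    · intro y hy
      rw [interior_Icc] at hy
      have hB : b y ^ 2 ≤ B ^ 2 := sq_le_sq' (abs_le.1 (hb y hy)).1 (abs_le.1 (hb y hy)).2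
      have hw : 0 ≤ 1 - y := by linarith [hy.2]
      have hw' := hy.1
      have k1 : 0 ≤ (2 - y) * (q - 3 / 2) * u₀ y ^ 2 := by
        have : 0 ≤ 2 - y := by linarith
        have : 0 ≤ q - 3 / 2 := by linarith
        positivity
      have k2 : 0 ≤ (2 - y) * (u₀ y + b y / 2) ^ 2 := by
        have : 0 ≤ 2 - y := by linarith
        positivity
      have k3 : 0 ≤ (1 - y) * u₀ y ^ 2 := by positivity
      have k4 : 0 ≤ y * b y ^ 2 := by positivity
      nlinarith [sq_nonneg (u₁ y + σ / 2), sq_nonneg (u₁ y), sq_nonneg (b y)]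
  have z : (0 : ℝ) ∈ Icc (0 : ℝ) 1 := by simp
  have o : (1 : ℝ) ∈ Icc (0 : ℝ) 1 := by simp
  have a1 := hmono 1 (by norm_num) z hy hy.1
  have a2 := hmono 1 (by norm_num) hy o hy.2
  have a3 := hmono (-1) (by norm_num) z hy hy.1
  have a4 := hmono (-1) (by norm_num) hy o hy.2
  simp only [h00, h10, h01] at a1 a2 a3 a4
  rw [abs_le]
  constructor <;> nlinarith [sq_nonneg (u₁ 1)]

/-- Differentiation of `∫ x in 0..y, G x y` when `G` vanishes at the moving endpoint. -/
lemma hasDerivAt_integral_moving {G : ℝ → ℝ → ℝ} (hG : ContDiff ℝ 1 (Function.uncurry G)) {y : ℝ}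
    (h0 : G y y = 0) :
    HasDerivAt (fun z => ∫ x in (0 : ℝ)..z, G x z) (∫ x in (0 : ℝ)..y, pdy G x y) y := by
  have hc : Continuous (Function.uncurry G) := hG.continuous
  have hc' : Continuous (Function.uncurry (pdy G)) := (contDiff_pdy (n := 0) hG).continuous
  have hcz (z : ℝ) : Continuous fun x => G x z := hc.comp (by fun_prop : Continuous fun x => (x, z))
  have hcz' (z : ℝ) : Continuous fun x => pdy G x z :=
    hc'.comp (by fun_prop : Continuous fun x => (x, z))
  obtain ⟨C, hC⟩ := ((isCompact_uIcc (a := (0 : ℝ)) (b := y)).prod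
    (isCompact_Icc (a := y - 1) (b := y + 1))).exists_bound_of_continuousOn hc'.continuousOn
  have fixed : HasDerivAt (fun z => ∫ x in (0 : ℝ)..y, G x z) (∫ x in (0 : ℝ)..y, pdy G x y) y := by
    refine (intervalIntegral.hasDerivAt_integral_of_dominated_loc_of_deriv_le
      (F := fun z x => G x z) (F' := fun z x => pdy G x z) (bound := fun _ => C)
      (Icc_mem_nhds (sub_one_lt y) (lt_add_one y)) (Eventually.of_forall fun z =>
        (hcz z).aestronglyMeasurable) ((hcz y).intervalIntegrable _ _)
      (hcz' y).aestronglyMeasurable (ae_of_all _ fun x hx z hz => ?_)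
      intervalIntegrable_const (ae_of_all _ fun x _ z _ => hasDerivAt_pdy hG x z)).2
    exact hC (x, z) ⟨uIoc_subset_uIcc hx, hz⟩
  have moving : HasDerivAt (fun z => ∫ x in y..z, G x z) 0 y := by
    rw [hasDerivAt_iff_isLittleO, Asymptotics.isLittleO_iff]
    intro ε hε
    obtain ⟨δ, hδ, hball⟩ := Metric.continuousAt_iff.1 (hc.continuousAt (x := (y, y))) ε hε
    filter_upwards [Metric.ball_mem_nhds y hδ] with z hz
    have hb : ∀ x ∈ uIoc y z, ‖G x z‖ ≤ ε := fun x hx => by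
      have hxy : |x - y| ≤ |z - y| := abs_sub_left_of_mem_uIcc (uIoc_subset_uIcc hx)
      rw [Metric.mem_ball, Real.dist_eq] at hz
      have := hball (x := (x, z)) (by
        rw [Prod.dist_eq, Real.dist_eq, Real.dist_eq]
        exact max_lt (hxy.trans_lt hz) hz)
      simp only [Function.uncurry_apply_pair, h0, dist_zero_right] at this
      exact this.le
    simpa using intervalIntegral.norm_integral_le_of_norm_le_const hb
  have h := fixed.add moving
  rw [add_zero] at h
  refine h.congr_of_eventuallyEq (Eventually.of_forall fun z => ?_)
  exact (intervalIntegral.integral_add_adjacent_intervals ((hcz z).intervalIntegrable _ _)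
    ((hcz z).intervalIntegrable _ _)).symm

/-- The exponential transform `∫₀ʸ exp (p x) g(x, y) dx`. -/
def expTransform (p : ℝ) (g : ℝ → ℝ → ℝ) (y : ℝ) : ℝ := ∫ x in (0 : ℝ)..y, Real.exp (p * x) * g x y

lemma continuous_expTransform (p : ℝ) {g : ℝ → ℝ → ℝ} (hg : Continuous (Function.uncurry g)) :
    Continuous (expTransform p g) := by
  refine intervalIntegral.continuous_parametric_intervalIntegral_of_continuous
    (f := fun y x => Real.exp (p * x) * g x y) ?_ continuous_id
  exact (by fun_prop : Continuous fun q : ℝ × ℝ => Real.exp (p * q.2)).mul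
    (hg.comp (by fun_prop : Continuous fun q : ℝ × ℝ => (q.2, q.1)))

lemma hasDerivAt_expTransform (p : ℝ) {g : ℝ → ℝ → ℝ} (hg : ContDiff ℝ 1 (Function.uncurry g))
    {y : ℝ} (h0 : g y y = 0) : HasDerivAt (expTransform p g) (expTransform p (pdy g) y) y := by
  have hG : ContDiff ℝ 1 (Function.uncurry fun x y => Real.exp (p * x) * g x y) :=
    (by fun_prop : ContDiff ℝ 1 fun q : ℝ × ℝ => Real.exp (p * q.1)).mul hg
  have h := hasDerivAt_integral_moving hG (y := y) (by simp [h0])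
  have hpd (x : ℝ) : pdy (fun x y => Real.exp (p * x) * g x y) x y
      = Real.exp (p * x) * pdy g x y :=
    ((hasDerivAt_pdy hg x y).const_mul _).deriv
  simp only [hpd] at h
  exact h

lemma expTransform_pdx (p : ℝ) {g : ℝ → ℝ → ℝ} (hg : ContDiff ℝ 1 (Function.uncurry g)) {y : ℝ}
    (h0 : g y y = 0) : expTransform p (pdx g) y = -g 0 y - p * expTransform p g y := by
  have hc : Continuous fun x => g x y := hg.continuous.comp (by fun_prop : Continuous fun x => (x, y))
  have hc' : Continuous fun x => pdx g x y :=
    (contDiff_pdx (n := 0) hg).continuous.comp (by fun_prop : Continuous fun x => (x, y))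
  have h := intervalIntegral.integral_mul_deriv_eq_deriv_mul (a := 0) (b := y)
    (u := fun x => Real.exp (p * x)) (u' := fun x => p * Real.exp (p * x))
    (v := fun x => g x y) (v' := fun x => pdx g x y)
    (fun x _ => by
      simpa [mul_comm] using ((hasDerivAt_id x).const_mul p).exp)
    (fun x _ => hasDerivAt_pdx hg x y)
    (Continuous.intervalIntegrable (by fun_prop) _ _) (hc'.intervalIntegrable _ _)
  simp only [expTransform, h, h0, mul_assoc, intervalIntegral.integral_const_mul]
  simp

/-- A continuous function on `[0, Y]` whose exponential moments grow subexponentially vanishes. -/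
lemma eq_zero_of_exp_moments {m : ℝ → ℝ} (hm : Continuous m) {Y : ℝ}
    (hbd : ∀ ε > 0, ∃ C, ∃ N : ℕ, ∀ n : ℕ, N ≤ n →
      |∫ x in (0 : ℝ)..Y, Real.exp (n * x) * m x| ≤ C * Real.exp (ε * n)) :
    ∀ t ∈ Ioo 0 Y, m t = 0 := by
  set f : ℕ → ℝ := fun n => ∫ x in (0 : ℝ)..Y, Real.exp (n * x) * m x with hf
  have hint (t : ℝ) (ht : t ∈ Ioo 0 Y) : ∫ x in (0 : ℝ)..t, m x = f 0 := by
    have hY : 0 ≤ Y := (ht.1.trans ht.2).le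
    set J : ℕ → ℝ := fun n => ∫ x in (0 : ℝ)..Y, Real.exp (-Real.exp (n * (x - t))) * m x with hJ
    have hlim : Tendsto J atTop (𝓝 (∫ x in (0 : ℝ)..Y, (Iio t).indicator m x)) := by
      refine intervalIntegral.tendsto_integral_filter_of_dominated_convergence (fun x => |m x|)
        (Eventually.of_forall fun n => Continuous.aestronglyMeasurable (by fun_prop))
        (Eventually.of_forall fun n => ae_of_all _ fun x _ => ?_)
        (hm.abs.intervalIntegrable _ _) ?_
      · rw [norm_mul, Real.norm_eq_abs, Real.norm_eq_abs, Real.abs_exp]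
        exact mul_le_of_le_one_left (abs_nonneg _)
          (Real.exp_le_one_iff.2 (neg_nonpos.2 (Real.exp_pos _).le))
      · have hne : ∀ᵐ x : ℝ, x ≠ t := by simp [ae_iff, measure_singleton]
        filter_upwards [hne] with x hx _
        rcases lt_or_gt_of_ne hx with hlt | hgt
        · rw [indicator_of_mem (mem_Iio.2 hlt)]
          have h1 : Tendsto (fun n : ℕ => (n : ℝ) * (x - t)) atTop atBot :=
            tendsto_natCast_atTop_atTop.atTop_mul_const_of_neg (sub_neg.2 hlt)
          have h2 := (Real.tendsto_exp_atBot.comp h1).neg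
          have h3 := (Real.continuous_exp.tendsto _).comp h2
          simpa using h3.mul_const (m x)
        · rw [indicator_of_notMem (by simpa using hgt.le)]
          have h1 : Tendsto (fun n : ℕ => (n : ℝ) * (x - t)) atTop atTop :=
            tendsto_natCast_atTop_atTop.atTop_mul_const (sub_pos.2 hgt)
          have h2 := tendsto_neg_atTop_atBot.comp (Real.tendsto_exp_atTop.comp h1)
          have h3 := Real.tendsto_exp_atBot.comp h2
          simpa using h3.mul_const (m x)
    have hind : ∫ x in (0 : ℝ)..Y, (Iio t).indicator m x = ∫ x in (0 : ℝ)..t, m x := by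
      rw [intervalIntegral.integral_of_le hY, intervalIntegral.integral_of_le ht.1.le,
        setIntegral_indicator measurableSet_Iio, integral_Ioc_eq_integral_Ioo (y := t)]
      congr 2
      ext x
      simp only [mem_inter_iff, mem_Ioc, mem_Iio, mem_Ioo]
      exact ⟨fun h => ⟨h.1.1, h.2⟩, fun h => ⟨⟨h.1, h.2.le.trans ht.2.le⟩, h.2⟩⟩
    rw [hind] at hlim
    obtain ⟨K, hK⟩ := (isCompact_uIcc (a := (0 : ℝ)) (b := Y)).exists_bound_of_continuousOn
      hm.continuousOn
    have hseries (n : ℕ) : HasSum (fun k : ℕ =>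
        (-1) ^ k / (k.factorial : ℝ) * Real.exp (-(t * (k * n : ℕ))) * f (k * n)) (J n) := by
      have h := intervalIntegral.hasSum_integral_of_dominated_convergence (a := 0) (b := Y)
        (μ := volume)
        (F := fun (k : ℕ) x => (-Real.exp (n * (x - t))) ^ k / (k.factorial : ℝ) * m x)
        (f := fun x => Real.exp (-Real.exp (n * (x - t))) * m x)
        (fun k _ => Real.exp (n * Y) ^ k / (k.factorial : ℝ) * K)
        (fun k => Continuous.aestronglyMeasurable (by fun_prop))
        (fun k => ae_of_all _ fun x hx => by
          have hx' := uIoc_subset_uIcc hx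
          rw [norm_mul, norm_div, norm_pow, norm_neg, Real.norm_of_nonneg (Real.exp_pos _).le,
            Real.norm_of_nonneg (Nat.cast_nonneg _)]
          rw [uIoc_of_le hY] at hx
          gcongr
          · linarith [hx.2, ht.1]
          · exact hK x hx')
        (ae_of_all _ fun _ _ => (Real.summable_pow_div_factorial _).mul_right K)
        intervalIntegrable_const
        (ae_of_all _ fun x _ => by
          have := NormedSpace.expSeries_div_hasSum_exp (𝔸 := ℝ) (-Real.exp (n * (x - t)))
          rw [← Real.exp_eq_exp_ℝ] at this
          exact this.mul_right (m x))
      refine (congrArg (HasSum · (J n)) (funext fun k => ?_)).mpr h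
      rw [hf, ← intervalIntegral.integral_const_mul]
      refine intervalIntegral.integral_congr fun x _ => ?_
      have : (-Real.exp (n * (x - t))) ^ k
          = (-1) ^ k * (Real.exp (-(t * (k * n : ℕ))) * Real.exp ((k * n : ℕ) * x)) := by
        rw [neg_pow, ← Real.exp_nat_mul, ← Real.exp_add]
        congr 2
        push_cast
        ring
      simp only [this]
      ring
    obtain ⟨C, N, hC⟩ := hbd (t / 2) (half_pos ht.1)
    have hC0 : 0 ≤ C := by
      have := (abs_nonneg _).trans (hC N le_rfl)
      exact nonneg_of_mul_nonneg_left this (Real.exp_pos _)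
    have hclose : ∀ᶠ n : ℕ in atTop,
        ‖J n - f 0‖ ≤ C * Real.exp 1 * Real.exp (-(t / 2 * n)) := by
      filter_upwards [eventually_ge_atTop N] with n hn
      have h1 := (hasSum_nat_add_iff' 1).2 (hseries n)
      have h2 : HasSum (fun k : ℕ => C * Real.exp (-(t / 2 * n)) * (1 ^ k / (k.factorial : ℝ)))
          (C * Real.exp (-(t / 2 * n)) * Real.exp 1) := by
        have := NormedSpace.expSeries_div_hasSum_exp (𝔸 := ℝ) 1
        rw [← Real.exp_eq_exp_ℝ] at this
        exact this.mul_left _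
      have h3 := h1.norm_le_of_bounded h2 fun k => by
        have hkn : n ≤ (k + 1) * n := Nat.le_mul_of_pos_left n k.succ_pos
        rw [norm_mul, norm_mul, norm_div, norm_pow, norm_neg, norm_one, one_pow,
          Real.norm_of_nonneg (Nat.cast_nonneg _), Real.norm_of_nonneg (Real.exp_pos _).le, one_pow]
        have e1 : Real.exp (-(t * ((k + 1) * n : ℕ))) * ‖f ((k + 1) * n)‖
            ≤ C * Real.exp (-(t / 2 * n)) := by
          calc Real.exp (-(t * ((k + 1) * n : ℕ))) * ‖f ((k + 1) * n)‖
              ≤ Real.exp (-(t * ((k + 1) * n : ℕ)))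
                * (C * Real.exp (t / 2 * ((k + 1) * n : ℕ))) := by
                gcongr
                exact hC _ (hn.trans hkn)
            _ = C * Real.exp (-(t / 2 * ((k + 1) * n : ℕ))) := by
                rw [mul_left_comm, ← Real.exp_add]
                ring_nf
            _ ≤ C * Real.exp (-(t / 2 * n)) := by
                have := ht.1
                gcongr
        have e2 : 1 / ((k + 1).factorial : ℝ) ≤ 1 / (k.factorial : ℝ) := by
          gcongr
          omega
        calc 1 / ((k + 1).factorial : ℝ) * Real.exp (-(t * ((k + 1) * n : ℕ))) * ‖f ((k + 1) * n)‖
            = 1 / ((k + 1).factorial : ℝ)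
              * (Real.exp (-(t * ((k + 1) * n : ℕ))) * ‖f ((k + 1) * n)‖) := by ring
          _ ≤ 1 / (k.factorial : ℝ) * (C * Real.exp (-(t / 2 * n))) := by gcongr
          _ = _ := by ring
      calc ‖J n - f 0‖ ≤ C * Real.exp (-(t / 2 * n)) * Real.exp 1 := by simpa using h3
        _ = _ := by ring
    have hto0 : Tendsto (fun n : ℕ => C * Real.exp 1 * Real.exp (-(t / 2 * n))) atTop (𝓝 0) := by
      have h1 : Tendsto (fun n : ℕ => t / 2 * (n : ℝ)) atTop atTop :=
        tendsto_natCast_atTop_atTop.const_mul_atTop (half_pos ht.1)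
      simpa using (Real.tendsto_exp_neg_atTop_nhds_zero.comp h1).const_mul (C * Real.exp 1)
    have hJ0 : Tendsto J atTop (𝓝 (f 0)) :=
      tendsto_iff_norm_sub_tendsto_zero.2 (squeeze_zero' (Eventually.of_forall fun _ => norm_nonneg _)
        hclose hto0)
    exact tendsto_nhds_unique hlim hJ0
  intro t ht
  have h1 : HasDerivAt (fun s => ∫ x in (0 : ℝ)..s, m x) (m t) t :=
    intervalIntegral.integral_hasDerivAt_right (hm.intervalIntegrable _ _)
      hm.stronglyMeasurable.stronglyMeasurableAtFilter hm.continuousAt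
  have h2 : HasDerivAt (fun s => ∫ x in (0 : ℝ)..s, m x) 0 t :=
    (hasDerivAt_const t (f 0)).congr_of_eventuallyEq
      (Filter.eventuallyEq_of_mem (Ioo_mem_nhds ht.1 ht.2) hint)
  exact h1.unique h2

lemma expTransform_ode {lam : ℝ} {h : ℝ → ℝ → ℝ} (hh : ContDiff ℝ 3 (Function.uncurry h))
    (hpde : ∀ x y : ℝ, (x, y) ∈ T →
      pdx (pdx (pdx h)) x y + pdy (pdy (pdy h)) x y + pdx h x y + pdy h x y = -lam * h x y)
    {y : ℝ} (hy : y ∈ Icc (0 : ℝ) 1) (h0 : h y y = 0) (h1 : pdx h y y = 0)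
    (h2 : pdx (pdx h) y y = 0) (p : ℝ) :
    expTransform p (pdy (pdy (pdy h))) y + expTransform p (pdy h) y
      = (p ^ 3 + p - lam) * expTransform p h y
        + (pdx (pdx h) 0 y - p * pdx h 0 y + (p ^ 2 + 1) * h 0 y) := by
  have cx : ContDiff ℝ 2 (Function.uncurry (pdx h)) := contDiff_pdx (n := 2) hh
  have cy : ContDiff ℝ 2 (Function.uncurry (pdy h)) := contDiff_pdy (n := 2) hh
  have cxx : ContDiff ℝ 1 (Function.uncurry (pdx (pdx h))) := contDiff_pdx (n := 1) cx
  have cyy : ContDiff ℝ 1 (Function.uncurry (pdy (pdy h))) := contDiff_pdy (n := 1) cy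
  have cxxx := contDiff_pdx (n := 0) cxx
  have cyyy := contDiff_pdy (n := 0) cyy
  have hint {g : ℝ → ℝ → ℝ} (hg : Continuous (Function.uncurry g)) :
      IntervalIntegrable (fun x => Real.exp (p * x) * g x y) volume 0 y := by
    have : Continuous fun x => g x y := hg.comp (by fun_prop : Continuous fun x => (x, y))
    exact Continuous.intervalIntegrable (by fun_prop) _ _
  have key : expTransform p (pdx (pdx (pdx h))) y + expTransform p (pdy (pdy (pdy h))) y
      + expTransform p (pdx h) y + expTransform p (pdy h) y = -lam * expTransform p h y := by
    unfold expTransform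
    rw [← intervalIntegral.integral_add (hint cxxx.continuous) (hint cyyy.continuous),
      ← intervalIntegral.integral_add ((hint cxxx.continuous).add (hint cyyy.continuous))
        (hint cx.continuous),
      ← intervalIntegral.integral_add (((hint cxxx.continuous).add (hint cyyy.continuous)).add
        (hint cx.continuous)) (hint cy.continuous),
      ← intervalIntegral.integral_const_mul]
    refine intervalIntegral.integral_congr fun x hx => ?_
    rw [uIcc_of_le hy.1] at hx
    have := hpde x y ⟨hx.1, hx.2, hy.2⟩
    linear_combination Real.exp (p * x) * this
  have e1 := expTransform_pdx p (hh.of_le (by norm_num)) h0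
  have e2 := expTransform_pdx p (cx.of_le (by norm_num)) h1
  have e3 := expTransform_pdx p cxx h2
  rw [e3, e2, e1] at key
  linear_combination key

lemma exists_abs_le_boundary {g : ℝ → ℝ → ℝ} (hg : Continuous (Function.uncurry g)) :
    ∃ C, ∀ y ∈ Icc (0 : ℝ) 1, |g 0 y| ≤ C :=
  isCompact_Icc.exists_bound_of_continuousOn (f := fun y => g 0 y)
    (hg.comp (by fun_prop : Continuous fun y : ℝ => ((0 : ℝ), y))).continuousOn

/-- The exponential moments of a homogeneous solution grow at most polynomially. -/
lemma exists_abs_expTransform_le {lam : ℝ} {h : ℝ → ℝ → ℝ}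
    (hh : ContDiff ℝ 3 (Function.uncurry h))
    (hpde : ∀ x y : ℝ, (x, y) ∈ T →
      pdx (pdx (pdx h)) x y + pdy (pdy (pdy h)) x y + pdx h x y + pdy h x y = -lam * h x y)
    (htop : ∀ x ∈ Icc (0 : ℝ) 1, h x 1 = 0) (hdiag : ∀ x ∈ Icc (0 : ℝ) 1, h x x = 0)
    (hdx : ∀ x ∈ Icc (0 : ℝ) 1, pdx h x x = 0) :
    ∃ C, 0 ≤ C ∧ ∀ p : ℝ, 1 ≤ p → lam + 2 ≤ p → ∀ y ∈ Icc (0 : ℝ) 1,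
      |expTransform p h y| ≤ C * p ^ 4 := by
  have cx : ContDiff ℝ 2 (Function.uncurry (pdx h)) := contDiff_pdx (n := 2) hh
  have cy : ContDiff ℝ 2 (Function.uncurry (pdy h)) := contDiff_pdy (n := 2) hh
  have cxx : ContDiff ℝ 1 (Function.uncurry (pdx (pdx h))) := contDiff_pdx (n := 1) cx
  have cyy : ContDiff ℝ 1 (Function.uncurry (pdy (pdy h))) := contDiff_pdy (n := 1) cy
  obtain ⟨C₀, hC₀⟩ := exists_abs_le_boundary hh.continuous
  obtain ⟨C₁, hC₁⟩ := exists_abs_le_boundary cx.continuous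
  obtain ⟨C₂, hC₂⟩ := exists_abs_le_boundary cxx.continuous
  have hzero : (0 : ℝ) ∈ Icc (0 : ℝ) 1 := by simp
  have n₀ : 0 ≤ C₀ := (abs_nonneg _).trans (hC₀ 0 hzero)
  have n₁ : 0 ≤ C₁ := (abs_nonneg _).trans (hC₁ 0 hzero)
  have n₂ : 0 ≤ C₂ := (abs_nonneg _).trans (hC₂ 0 hzero)
  refine ⟨1 + (C₂ + C₁ + 2 * C₀) ^ 2, by positivity, fun p hp hlp y hy => ?_⟩
  have hjet := fun z (hz : z ∈ Ioo (0 : ℝ) 1) =>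
    diag_jet_eq_zero hh hpde htop hdiag hdx (Ioo_subset_Icc_self hz)
  have hp2 : p ≤ p ^ 2 := by nlinarith
  have hbound := abs_le_of_third_order_ode (q := p ^ 3 + p - lam)
    (B := (C₂ + C₁ + 2 * C₀) * p ^ 2)
    (u₀ := expTransform p h) (u₁ := expTransform p (pdy h)) (u₂ := expTransform p (pdy (pdy h)))
    (u₃ := expTransform p (pdy (pdy (pdy h))))
    (b := fun y => pdx (pdx h) 0 y - p * pdx h 0 y + (p ^ 2 + 1) * h 0 y)
    (by nlinarith [pow_pos (zero_lt_one.trans_le hp) 3])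
    (continuous_expTransform p hh.continuous) (continuous_expTransform p cy.continuous)
    (continuous_expTransform p cyy.continuous)
    (fun z hz => hasDerivAt_expTransform p (hh.of_le (by norm_num))
      (hdiag z (Ioo_subset_Icc_self hz)))
    (fun z hz => hasDerivAt_expTransform p (cy.of_le (by norm_num)) (hjet z hz).1)
    (fun z hz => hasDerivAt_expTransform p cyy (hjet z hz).2.1)
    (fun z hz => expTransform_ode hh hpde (Ioo_subset_Icc_self hz)
      (hdiag z (Ioo_subset_Icc_self hz)) (hdx z (Ioo_subset_Icc_self hz)) (hjet z hz).2.2 p)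
    (fun z hz => by
      have hz' := Ioo_subset_Icc_self hz
      have hp0 : 0 ≤ p := zero_le_one.trans hp
      calc |pdx (pdx h) 0 z - p * pdx h 0 z + (p ^ 2 + 1) * h 0 z|
          ≤ |pdx (pdx h) 0 z| + |p * pdx h 0 z| + |(p ^ 2 + 1) * h 0 z| :=
            (abs_add_le _ _).trans (add_le_add_left (abs_sub _ _) _)
        _ = |pdx (pdx h) 0 z| + p * |pdx h 0 z| + (p ^ 2 + 1) * |h 0 z| := by
            rw [abs_mul, abs_mul, abs_of_nonneg hp0, abs_of_nonneg (by positivity : 0 ≤ p ^ 2 + 1)]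
        _ ≤ C₂ + p * C₁ + (p ^ 2 + 1) * C₀ := by
            gcongr
            exacts [hC₂ z hz', hC₁ z hz', hC₀ z hz']
        _ ≤ (C₂ + C₁ + 2 * C₀) * p ^ 2 := by nlinarith)
    (by simp [expTransform]) (by simp [expTransform])
    (by
      refine (intervalIntegral.integral_congr fun x hx => ?_).trans intervalIntegral.integral_zero
      rw [uIcc_of_le zero_le_one] at hx
      simp [htop x hx]) hy
  calc _ ≤ 1 + ((C₂ + C₁ + 2 * C₀) * p ^ 2) ^ 2 := hbound
    _ ≤ p ^ 4 + ((C₂ + C₁ + 2 * C₀) * p ^ 2) ^ 2 := by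
      gcongr
      exact one_le_pow₀ hp
    _ = _ := by ring

lemma eq_zero_of_homogeneous {lam : ℝ} {h : ℝ → ℝ → ℝ} (hh : ContDiff ℝ 3 (Function.uncurry h))
    (hpde : ∀ x y : ℝ, (x, y) ∈ T →
      pdx (pdx (pdx h)) x y + pdy (pdy (pdy h)) x y + pdx h x y + pdy h x y = -lam * h x y)
    (htop : ∀ x ∈ Icc (0 : ℝ) 1, h x 1 = 0) (hdiag : ∀ x ∈ Icc (0 : ℝ) 1, h x x = 0)
    (hdx : ∀ x ∈ Icc (0 : ℝ) 1, pdx h x x = 0) {x y : ℝ} (hxy : (x, y) ∈ T) : h x y = 0 := by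
  obtain ⟨hx0, hxy', hy1⟩ : 0 ≤ x ∧ x ≤ y ∧ y ≤ 1 := hxy
  rcases (hx0.trans hxy').eq_or_lt with hy0 | hy0
  · obtain rfl : x = y := le_antisymm hxy' (hy0 ▸ hx0)
    exact hdiag x ⟨hx0, hy1⟩
  have hcont : Continuous fun x => h x y :=
    hh.continuous.comp (by fun_prop : Continuous fun x => (x, y))
  obtain ⟨C, hC0, hC⟩ := exists_abs_expTransform_le hh hpde htop hdiag hdx
  have hIoo : ∀ t ∈ Ioo 0 y, h t y = 0 := by
    refine eq_zero_of_exp_moments hcont fun ε hε => ?_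
    obtain ⟨N, hN⟩ := exists_nat_ge (lam + 2)
    refine ⟨C * (24 / ε ^ 4), max N 1, fun n hn => ?_⟩
    have hn1 : (1 : ℝ) ≤ n := by exact_mod_cast (le_max_right _ _).trans hn
    have hnN : (N : ℝ) ≤ n := by exact_mod_cast (le_max_left _ _).trans hn
    refine (hC n hn1 (hN.trans hnN) y ⟨hy0.le, hy1⟩).trans ?_
    have hexp := Real.pow_div_factorial_le_exp (ε * n) (by positivity) 4
    rw [mul_assoc]
    gcongr
    rw [div_mul_eq_mul_div, le_div_iff₀ (by positivity)]
    norm_num [Nat.factorial] at hexp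
    linarith [mul_pow ε (n : ℝ) 4]
  have hclosed : IsClosed {t | h t y = 0} := isClosed_eq hcont continuous_const
  have := hclosed.closure_subset_iff.2 hIoo
  rw [closure_Ioo hy0.ne] at this
  exact this ⟨hx0, hxy'⟩

lemma IsControllerKernel.eq_on_T {lam : ℝ} {k k' : ℝ → ℝ → ℝ} (hk : IsControllerKernel lam k)
    (hk' : IsControllerKernel lam k') {x y : ℝ} (hxy : (x, y) ∈ T) : k' x y = k x y := by
  obtain ⟨c, pde, top, diag, dx⟩ := hk
  obtain ⟨c', pde', top', diag', dx'⟩ := hk'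
  have one {g : ℝ → ℝ → ℝ} (hg : ContDiff ℝ 3 (Function.uncurry g)) :
      ContDiff ℝ 1 (Function.uncurry g) := hg.of_le (by norm_num)
  have ex {g : ℝ → ℝ → ℝ} (hg : ContDiff ℝ 3 (Function.uncurry g)) :
      ContDiff ℝ 1 (Function.uncurry (pdx g)) := (contDiff_pdx (n := 2) hg).of_le (by norm_num)
  have ey {g : ℝ → ℝ → ℝ} (hg : ContDiff ℝ 3 (Function.uncurry g)) :
      ContDiff ℝ 1 (Function.uncurry (pdy g)) := (contDiff_pdy (n := 2) hg).of_le (by norm_num)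
  have exx {g : ℝ → ℝ → ℝ} (hg : ContDiff ℝ 3 (Function.uncurry g)) :
      ContDiff ℝ 1 (Function.uncurry (pdx (pdx g))) :=
    contDiff_pdx (n := 1) (contDiff_pdx (n := 2) hg)
  have eyy {g : ℝ → ℝ → ℝ} (hg : ContDiff ℝ 3 (Function.uncurry g)) :
      ContDiff ℝ 1 (Function.uncurry (pdy (pdy g))) :=
    contDiff_pdy (n := 1) (contDiff_pdy (n := 2) hg)
  have sx := pdx_sub (one c') (one c)
  have sy := pdy_sub (one c') (one c)
  refine sub_eq_zero.1 (eq_zero_of_homogeneous (lam := lam) (h := k' - k) (c'.sub c) ?_ ?_ ?_ ?_ hxy)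
  · intro x y hxy
    rw [sx, sy, pdx_sub (ex c') (ex c), pdx_sub (exx c') (exx c), pdy_sub (ey c') (ey c),
      pdy_sub (eyy c') (eyy c)]
    simp only [Pi.sub_apply]
    linear_combination pde' x y hxy - pde x y hxy
  · intro x hx
    simp [top x hx, top' x hx]
  · intro x hx
    simp [diag x hx, diag' x hx]
  · intro x hx
    rw [sx]
    simp [dx x hx, dx' x hx]

end Uniqueness

/-- Existence and uniqueness (as a function on `T`) of the controller kernel. -/
theorem controller_kernel_exists_unique (lam : ℝ) (hlam : 0 < lam) :
    ∃ k : ℝ → ℝ → ℝ, IsControllerKernel lam k ∧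
      ∀ k' : ℝ → ℝ → ℝ, IsControllerKernel lam k' →
        ∀ x y : ℝ, (x, y) ∈ T → k' x y = k x y := by
  obtain ⟨k, hk⟩ := exists_isControllerKernel hlam
  exact ⟨k, hk, fun k' hk' x y hxy => hk.eq_on_T hk' hxy⟩
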